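/- Let (X, T) be a dynamical system. The following statements are equivalent: (1) (X, T) is equicontinuous; (2) (K(X), T_K) is equicontinuous; (3) (𝔽₀(X), T_F) is equicontinuous. -/

import Mathlib

open Metric Set TopologicalSpace Filter Function
open scoped Classical

variable {X Y : Type*}

/-- Extended Hausdorff metric on subsets of `X`: the usual Hausdorff distance between
two nonempty sets (or two empty sets), and `diam X` when exactly one of them is empty. -/
noncomputable def eHd (X : Type*) [MetricSpace X] (A B : Set X) : ℝ :=
  if (A.Nonempty ∧ B.Nonempty) ∨ (A = ∅ ∧ B = ∅) then Metric.hausdorffDist A B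
  else Metric.diam (Set.univ : Set X)

/-- The `α`-cut of a fuzzy set. -/
def cut (A : X → ℝ) (α : ℝ) : Set X := {x | α ≤ A x}

/-- The levelwise metric `d_∞` on fuzzy sets. -/
noncomputable def dinf [MetricSpace X] (A B : X → ℝ) : ℝ :=
  sSup {r : ℝ | ∃ α ∈ Set.Ioc (0:ℝ) 1, r = eHd X (cut A α) (cut B α)}

/-- A fuzzy set: an upper semicontinuous function into `[0,1]`. -/
def IsFuzzy [TopologicalSpace X] (A : X → ℝ) : Prop :=
  (∀ x, A x ∈ Set.Icc (0:ℝ) 1) ∧ UpperSemicontinuous A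

/-- `𝔽₀(X)`: nonempty (not identically zero) u.s.c. fuzzy sets. -/
def F0 (X : Type*) [TopologicalSpace X] : Set (X → ℝ) :=
  {A | IsFuzzy A ∧ ∃ x, A x ≠ 0}

/-- `𝔽^{=λ}(X)`: u.s.c. fuzzy sets with maximum value `λ`. -/
def Feq (X : Type*) [TopologicalSpace X] (lam : ℝ) : Set (X → ℝ) :=
  {A | IsFuzzy A ∧ (∃ x, A x = lam) ∧ ∀ x, A x ≤ lam}

/-- `𝔽^{≥λ}(X)`: u.s.c. fuzzy sets attaining a value `≥ λ`. -/
def Fge (X : Type*) [TopologicalSpace X] (lam : ℝ) : Set (X → ℝ) :=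
  {A | IsFuzzy A ∧ ∃ x, lam ≤ A x}

/-- Zadeh's extension of `T`. -/
noncomputable def zadeh (T : X → X) (A : X → ℝ) : X → ℝ :=
  fun x => sSup (A '' (T ⁻¹' {x}))

/-- The induced map `T_K` on the hyperspace of nonempty closed (= compact) subsets. -/
def hyper [TopologicalSpace X] (T : X → X) (hT : Continuous T)
    (A : NonemptyCompacts X) : NonemptyCompacts X :=
  ⟨⟨T '' A, A.isCompact.image hT⟩, A.nonempty.image T⟩

/-- Topological transitivity. -/
def TopTrans [TopologicalSpace Y] (S : Y → Y) : Prop :=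
  ∀ U V : Set Y, IsOpen U → IsOpen V → U.Nonempty → V.Nonempty →
    ∃ n : ℕ, (S^[n] '' U ∩ V).Nonempty

/-- Weak mixing: `S × S` is transitive. -/
def TopWeakMix [TopologicalSpace Y] (S : Y → Y) : Prop :=
  TopTrans (fun p : Y × Y => (S p.1, S p.2))

/-- Topological transitivity of `S` restricted to `C`, for the topology induced by the
(pseudo)metric `ρ`, phrased via metric balls. -/
def TransOn (ρ : Y → Y → ℝ) (S : Y → Y) (C : Set Y) : Prop :=
  ∀ A ∈ C, ∀ B ∈ C, ∀ ε > 0, ∃ n : ℕ, ∃ E ∈ C, ρ E A < ε ∧ ρ (S^[n] E) B < ε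

/-- Weak mixing of `S` restricted to `C`, phrased via metric balls. -/
def WeakMixOn (ρ : Y → Y → ℝ) (S : Y → Y) (C : Set Y) : Prop :=
  ∀ A₁ ∈ C, ∀ A₂ ∈ C, ∀ B₁ ∈ C, ∀ B₂ ∈ C, ∀ ε > 0, ∃ n : ℕ,
    ∃ E₁ ∈ C, ∃ E₂ ∈ C, ρ E₁ A₁ < ε ∧ ρ E₂ A₂ < ε ∧
      ρ (S^[n] E₁) B₁ < ε ∧ ρ (S^[n] E₂) B₂ < ε


/-- Equicontinuity of (the iterates of) a self-map of a metric space. -/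
def EquicontM {Z : Type*} [PseudoMetricSpace Z] (S : Z → Z) : Prop :=
  ∀ ε > 0, ∃ δ > 0, ∀ y z : Z, dist y z < δ → ∀ n : ℕ, dist (S^[n] y) (S^[n] z) < ε

/-- Equicontinuity of `S` restricted to `C`, with respect to the metric `ρ`. -/
def EquicontOn (ρ : Y → Y → ℝ) (S : Y → Y) (C : Set Y) : Prop :=
  ∀ ε > 0, ∃ δ > 0, ∀ A ∈ C, ∀ B ∈ C, ρ A B < δ → ∀ n : ℕ, ρ (S^[n] A) (S^[n] B) < ε

/-!
Zadeh's extension acts on every positive `α`-cut as the image map of `T`: an upper semicontinuous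
`A` attains its supremum over each fibre of `T`, which is compact. A modulus of equicontinuity for
`T` therefore passes to all cuts at once, and from there to `d_∞`. When exactly one of two cuts is
empty, so is exactly one of their images, and the distance `diam X` between them does not change.
Conversely, characteristic functions embed `K(X)` isometrically and equivariantly into `𝔽₀(X)`, and
singletons embed `X` in the same way into `K(X)`.
-/

section Equicontinuity

lemma EquicontM.continuous [PseudoMetricSpace Y] {S : Y → Y} (h : EquicontM S) :
    Continuous S := by
  refine Metric.continuous_iff.2 fun y ε hε => ?_
  obtain ⟨δ, hδ, hS⟩ := h ε hε
  exact ⟨δ, hδ, fun z hzy => hS z y hzy 1⟩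

lemma EquicontM.equicontOn_univ [PseudoMetricSpace Y] {S : Y → Y} (h : EquicontM S) :
    EquicontOn dist S univ := by
  intro ε hε
  obtain ⟨δ, hδ, hS⟩ := h ε hε
  exact ⟨δ, hδ, fun y _ z _ hyz => hS y z hyz⟩

lemma EquicontOn.mono {ρ : Y → Y → ℝ} {S : Y → Y} {C D : Set Y} (h : EquicontOn ρ S D)
    (hCD : C ⊆ D) : EquicontOn ρ S C := by
  intro ε hε
  obtain ⟨δ, hδ, hS⟩ := h ε hε
  exact ⟨δ, hδ, fun A hA B hB => hS A (hCD hA) B (hCD hB)⟩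

lemma EquicontOn.equicontM_of_semiconj [PseudoMetricSpace X] {ρ : Y → Y → ℝ} {R : Y → Y}
    {C : Set Y} {S : X → X} {φ : X → Y} (h : EquicontOn ρ R C) (hφ : Semiconj φ S R)
    (hρ : ∀ x y, ρ (φ x) (φ y) = dist x y) (hC : ∀ x, φ x ∈ C) : EquicontM S := by
  intro ε hε
  obtain ⟨δ, hδ, hR⟩ := h ε hε
  refine ⟨δ, hδ, fun x y hxy n => ?_⟩
  rw [← hρ, (hφ.iterate_right n).eq, (hφ.iterate_right n).eq]
  exact hR _ (hC x) _ (hC y) ((hρ x y).trans_lt hxy) n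

end Equicontinuity

section HausdorffDistance

lemma hausdorffDist_image_le [PseudoMetricSpace X] [PseudoMetricSpace Y] {f : X → Y} {δ ε : ℝ}
    (hε : 0 ≤ ε) (hf : ∀ x y, dist x y < δ → dist (f x) (f y) ≤ ε) {A B : Set X}
    (hfin : hausdorffEDist A B ≠ ⊤) (hAB : hausdorffDist A B < δ) :
    hausdorffDist (f '' A) (f '' B) ≤ ε := by
  refine hausdorffDist_le_of_mem_dist hε ?_ ?_
  · rintro _ ⟨x, hx, rfl⟩
    obtain ⟨y, hy, hxy⟩ := exists_dist_lt_of_hausdorffDist_lt hx hAB hfin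
    exact ⟨f y, mem_image_of_mem f hy, hf x y hxy⟩
  · rintro _ ⟨y, hy, rfl⟩
    obtain ⟨x, hx, hxy⟩ := exists_dist_lt_of_hausdorffDist_lt' hy hAB hfin
    exact ⟨f x, mem_image_of_mem f hx, hf y x (dist_comm x y ▸ hxy)⟩

variable [MetricSpace X] {A B : Set X}

lemma eHd_of_nonempty (hA : A.Nonempty) (hB : B.Nonempty) :
    eHd X A B = hausdorffDist A B :=
  if_pos (.inl ⟨hA, hB⟩)

lemma eHd_image_of_eq_empty (f : X → X) (h : A = ∅ ∨ B = ∅) :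
    eHd X (f '' A) (f '' B) = eHd X A B := by
  rcases h with rfl | rfl <;> simp [eHd]

variable [BoundedSpace X]

lemma eHd_le_diam (A B : Set X) : eHd X A B ≤ diam (univ : Set X) := by
  unfold eHd
  split_ifs with h
  · rcases h with ⟨hA, hB⟩ | ⟨rfl, rfl⟩
    · calc
        hausdorffDist A B ≤ diam (A ∪ B) := hausdorffDist_le_diam hA (.all A) hB (.all B)
        _ ≤ diam univ := diam_mono (subset_univ _) (.all univ)
    · simpa only [hausdorffDist_self_zero] using diam_nonneg (s := (univ : Set X))
  · exact le_rfl

lemma eHd_image_le {f : X → X} {δ ε : ℝ} (hε : 0 ≤ ε)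
    (hf : ∀ x y, dist x y < δ → dist (f x) (f y) ≤ ε)
    (hδ_lt : eHd X A B < δ) (hε_le : eHd X A B ≤ ε) : eHd X (f '' A) (f '' B) ≤ ε := by
  rcases A.eq_empty_or_nonempty with hA | hA
  · rwa [eHd_image_of_eq_empty f (.inl hA)]
  rcases B.eq_empty_or_nonempty with hB | hB
  · rwa [eHd_image_of_eq_empty f (.inr hB)]
  rw [eHd_of_nonempty hA hB] at hδ_lt
  rw [eHd_of_nonempty (hA.image f) (hB.image f)]
  exact hausdorffDist_image_le hε hf
    (hausdorffEDist_ne_top_of_nonempty_of_bounded hA hB (.all A) (.all B)) hδ_lt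

end HausdorffDistance

section LevelwiseMetric

variable [MetricSpace X]

lemma dinf_le {A B : X → ℝ} {r : ℝ}
    (h : ∀ α ∈ Ioc (0 : ℝ) 1, eHd X (cut A α) (cut B α) ≤ r) : dinf A B ≤ r := by
  refine csSup_le ⟨_, 1, right_mem_Ioc.2 one_pos, rfl⟩ ?_
  rintro _ ⟨α, hα, rfl⟩
  exact h α hα

lemma eHd_cut_le_dinf [BoundedSpace X] (A B : X → ℝ) {α : ℝ} (hα : α ∈ Ioc (0 : ℝ) 1) :
    eHd X (cut A α) (cut B α) ≤ dinf A B := by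
  refine le_csSup ⟨diam (univ : Set X), ?_⟩ ⟨α, hα, rfl⟩
  rintro _ ⟨β, _, rfl⟩
  exact eHd_le_diam _ _

end LevelwiseMetric

section Zadeh

-- The junk value `sSup ∅ = 0` of `ℝ` is also the supremum of `∅` in `[0,1]`.
lemma zadeh_of_notMem_range {T : X → X} {x : X} (A : X → ℝ) (hx : x ∉ range T) :
    zadeh T A x = 0 := by
  rw [zadeh, preimage_singleton_eq_empty.2 hx, image_empty, Real.sSup_empty]

variable [TopologicalSpace X] [CompactSpace X] {T : X → X} {A : X → ℝ} {α : ℝ}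

lemma isGreatest_zadeh [T1Space X] (hT : Continuous T) (hA : UpperSemicontinuous A) {x : X}
    (hx : x ∈ range T) : IsGreatest (A '' (T ⁻¹' {x})) (zadeh T A x) := by
  have hcompact : IsCompact (T ⁻¹' {x}) := (isClosed_singleton.preimage hT).isCompact
  obtain ⟨y, hy, hmax⟩ := (hA.upperSemicontinuousOn _).exists_isMaxOn hx hcompact
  have hgreatest : IsGreatest (A '' (T ⁻¹' {x})) (A y) :=
    ⟨mem_image_of_mem A hy, forall_mem_image.2 hmax⟩
  rwa [zadeh, hgreatest.csSup_eq]

lemma cut_zadeh [T1Space X] (hT : Continuous T) (hA : UpperSemicontinuous A) (hα : 0 < α) :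
    cut (zadeh T A) α = T '' cut A α := by
  ext x
  by_cases hx : x ∈ range T
  · have hgreatest := isGreatest_zadeh hT hA hx
    constructor
    · intro hαx
      obtain ⟨y, hyx, hAy⟩ := hgreatest.1
      exact ⟨y, hαx.trans hAy.ge, hyx⟩
    · rintro ⟨y, hαy, hyx⟩
      exact hαy.trans (hgreatest.2 ⟨y, hyx, rfl⟩)
  · refine iff_of_false ?_ fun h => hx (image_subset_range T _ h)
    simpa only [cut, mem_ofPred_eq, zadeh_of_notMem_range A hx, not_le] using hα

variable [T2Space X]

lemma isFuzzy_zadeh (hT : Continuous T) (hA : IsFuzzy A) : IsFuzzy (zadeh T A) := by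
  have hmem : ∀ x, zadeh T A x ∈ Icc (0 : ℝ) 1 := fun x =>
    ⟨Real.sSup_nonneg (forall_mem_image.2 fun y _ => (hA.1 y).1),
      Real.sSup_le (forall_mem_image.2 fun y _ => (hA.1 y).2) zero_le_one⟩
  refine ⟨hmem, upperSemicontinuous_iff_isClosed_preimage.2 fun α => ?_⟩
  change IsClosed (cut (zadeh T A) α)
  rcases le_or_gt α 0 with hα | hα
  · rw [show cut (zadeh T A) α = univ from eq_univ_of_forall fun x => hα.trans (hmem x).1]
    exact isClosed_univ
  · have hcut : IsClosed (cut A α) := upperSemicontinuous_iff_isClosed_preimage.1 hA.2 α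
    rw [cut_zadeh hT hA.2 hα]
    exact (hcut.isCompact.image hT).isClosed

lemma cut_zadeh_iterate (hT : Continuous T) (hA : IsFuzzy A) (hα : 0 < α) (n : ℕ) :
    cut ((zadeh T)^[n] A) α = T^[n] '' cut A α := by
  induction n with
  | zero => simp
  | succ n ih =>
    have hfuzzy : IsFuzzy ((zadeh T)^[n] A) :=
      Iterate.rec IsFuzzy hA (fun _ => isFuzzy_zadeh hT) n
    rw [iterate_succ_apply', cut_zadeh hT hfuzzy.2 hα, ih, iterate_succ', image_comp]

end Zadeh

section CharacteristicFunction

lemma cut_indicator_one (C : Set X) {α : ℝ} (hα : α ∈ Ioc (0 : ℝ) 1) :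
    cut (indicator C 1) α = C := by
  ext x
  by_cases hx : x ∈ C <;> simp [cut, hx, hα.1, hα.2]

lemma dinf_indicator_one [MetricSpace X] (C D : Set X) :
    dinf (indicator C 1) (indicator D 1) = eHd X C D := by
  refine IsGreatest.csSup_eq ⟨⟨1, right_mem_Ioc.2 one_pos, ?_⟩, ?_⟩
  · simp only [cut_indicator_one _ (right_mem_Ioc.2 (one_pos (α := ℝ)))]
  · rintro _ ⟨α, hα, rfl⟩
    rw [cut_indicator_one C hα, cut_indicator_one D hα]

lemma indicator_one_mem_F0 [TopologicalSpace X] {C : Set X} (hC : IsClosed C)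
    (hne : C.Nonempty) : indicator C 1 ∈ F0 X := by
  obtain ⟨x, hx⟩ := hne
  refine ⟨⟨fun y => ?_, hC.upperSemicontinuous_indicator zero_le_one⟩, x, by simp [hx]⟩
  exact ⟨indicator_nonneg (fun _ _ => zero_le_one) y,
    indicator_le_self' (fun _ _ => zero_le_one) y⟩

lemma zadeh_indicator_one (T : X → X) (C : Set X) :
    zadeh T (indicator C 1) = indicator (T '' C) 1 := by
  ext x
  by_cases hx : x ∈ T '' C
  · obtain ⟨y, hy, rfl⟩ := hx
    rw [indicator_of_mem (mem_image_of_mem T hy)]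
    refine IsGreatest.csSup_eq ⟨⟨y, rfl, indicator_of_mem hy 1⟩, ?_⟩
    exact forall_mem_image.2 fun z _ => indicator_le_self' (fun _ _ => zero_le_one) z
  · have hzero : ∀ y ∈ T ⁻¹' {x}, indicator C (1 : X → ℝ) y = 0 := fun y hyx =>
      indicator_of_notMem (fun hy => hx ⟨y, hy, hyx⟩) 1
    rw [indicator_of_notMem hx]
    exact le_antisymm (Real.sSup_nonpos (forall_mem_image.2 fun y hy => (hzero y hy).le))
      (Real.sSup_nonneg (forall_mem_image.2 fun y hy => (hzero y hy).ge))

end CharacteristicFunction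

section Transfer

variable [MetricSpace X] {T : X → X}

lemma EquicontM.equicontOn_zadeh [CompactSpace X] (h : EquicontM T) :
    EquicontOn dinf (zadeh T) {A | IsFuzzy A} := by
  intro ε hε
  obtain ⟨δ, hδ, hTδ⟩ := h (ε / 2) (half_pos hε)
  refine ⟨min δ (ε / 2), lt_min hδ (half_pos hε), fun A hA B hB hAB n => ?_⟩
  refine (dinf_le fun α hα => ?_).trans_lt (half_lt_self hε)
  obtain ⟨hcut_δ, hcut_ε⟩ := lt_min_iff.1 ((eHd_cut_le_dinf A B hα).trans_lt hAB)
  rw [cut_zadeh_iterate h.continuous hA hα.1, cut_zadeh_iterate h.continuous hB hα.1]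
  exact eHd_image_le (half_pos hε).le (fun x y hxy => (hTδ x y hxy n).le) hcut_δ hcut_ε.le

lemma equicontM_hyper_of_equicontOn_zadeh (hT : Continuous T)
    (h : EquicontOn dinf (zadeh T) (F0 X)) : EquicontM (hyper T hT) := by
  refine h.equicontM_of_semiconj (φ := fun K => indicator (K : Set X) 1) ?_ ?_ ?_
  · exact fun K => (zadeh_indicator_one T K).symm
  · intro K L
    rw [dinf_indicator_one, eHd_of_nonempty K.nonempty L.nonempty, NonemptyCompacts.dist_eq]
  · exact fun K => indicator_one_mem_F0 K.isCompact.isClosed K.nonempty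

lemma equicontM_of_equicontM_hyper (hT : Continuous T) (h : EquicontM (hyper T hT)) :
    EquicontM T := by
  refine h.equicontOn_univ.equicontM_of_semiconj
    (φ := fun x => ({x} : NonemptyCompacts X)) ?_ ?_ ?_
  · exact fun _ => NonemptyCompacts.ext image_singleton.symm
  · exact TopologicalSpace.NonemptyCompacts.isometry_singleton.dist_eq
  · exact fun _ => mem_univ _

end Transfer

theorem equicontinuous_tfae_general {X : Type*} [MetricSpace X] [CompactSpace X]
    (T : X → X) (hT : Continuous T) :
    List.TFAE
      [EquicontM T,
       EquicontM (hyper T hT),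
       EquicontOn dinf (zadeh T) (F0 X)] := by
  tfae_have 1 → 3 := fun h => h.equicontOn_zadeh.mono fun _ hA => hA.1
  tfae_have 3 → 2 := equicontM_hyper_of_equicontOn_zadeh hT
  tfae_have 2 → 1 := equicontM_of_equicontM_hyper hT
  tfae_finish

/-- Equicontinuity of `(X,T)`, of `(K(X), T_K)` and of the Zadeh extension on `𝔽₀(X)`
are all equivalent. -/
theorem equicontinuous_tfae {X : Type*} [MetricSpace X] [CompactSpace X] [Nontrivial X]
    (T : X → X) (hT : Continuous T) (hTs : Function.Surjective T) :
    List.TFAE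
      [EquicontM T,
       EquicontM (hyper T hT),
       EquicontOn dinf (zadeh T) (F0 X)] :=
  equicontinuous_tfae_general T hT
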